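/- Let p be a prime, n a natural number, λ_1 ≥ ⋯ ≥ λ_t a partition of n, U = ℤ/p^{λ_1}ℤ ⊕ ⋯ ⊕ ℤ/p^{λ_t}ℤ, and V = R_n/(T^{λ_1}) ⊕ ⋯ ⊕ R_n/(T^{λ_t}) over R_n = (ℤ/pℤ)[X]/(X^n). Then there exists a bijection Φ between the set of isomorphism classes of ℤ-bilinear multiplications μ on U with p·μ(x,y) = 0 for all x,y, and the set of isomorphism classes of R_n-bilinear multiplications ν on V with T•ν(x,y) = 0 for all x,y, such that: (a) the class of μ satisfies the Lie axioms (μ(x,x) = 0 for all x, and the Jacobi identity μ(μ(x,y),z) + μ(μ(y,z),x) + μ(μ(z,x),y) = 0 for all x,y,z) if and only if the class Φ(μ) satisfies the Lie axioms; and (b) when both classes are Lie, the Lie ring (U,μ) is nilpotent if and only if the R_n-Lie algebra (V,Φ(μ)) is nilpotent. -/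

import Mathlib

set_option synthInstance.maxHeartbeats 1000000
open Polynomial

/-- The ring `R_n = (ℤ/pℤ)[X]/(Xⁿ)`. -/
noncomputable abbrev Rn (p n : ℕ) : Type :=
  Polynomial (ZMod p) ⧸ Ideal.span {(X : Polynomial (ZMod p)) ^ n}

/-- `T`, the image of `X` in `R_n`. -/
noncomputable def Tn (p n : ℕ) : Rn p n := Ideal.Quotient.mk _ X

/-- The abelian group `U = ℤ/p^{λ₁}ℤ ⊕ ⋯ ⊕ ℤ/p^{λ_t}ℤ`. -/
abbrev Umod (p t : ℕ) (lam : Fin t → ℕ) : Type := ∀ j : Fin t, ZMod (p ^ lam j)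

/-- The `R_n`-module `V = R_n/(T^{λ₁}) ⊕ ⋯ ⊕ R_n/(T^{λ_t})`. -/
noncomputable abbrev Vmod (p n t : ℕ) (lam : Fin t → ℕ) : Type :=
  ∀ j : Fin t, Rn p n ⧸ Submodule.span (Rn p n) {Tn p n ^ lam j}

/-- `ℤ`-bilinear (i.e. biadditive) multiplications on `U` killed by `p`. -/
def MulU (p t : ℕ) (lam : Fin t → ℕ) : Type :=
  { μ : Umod p t lam →+ Umod p t lam →+ Umod p t lam // ∀ x y, p • μ x y = 0 }

/-- `R_n`-bilinear multiplications on `V` killed by `T`. -/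
noncomputable def MulV (p n t : ℕ) (lam : Fin t → ℕ) : Type :=
  { ν : Vmod p n t lam →ₗ[Rn p n] Vmod p n t lam →ₗ[Rn p n] Vmod p n t lam //
      ∀ x y, Tn p n • ν x y = 0 }

/-- Isomorphism of multiplications on `U`, via additive automorphisms of `U`. -/
def relU (p t : ℕ) (lam : Fin t → ℕ) (μ₁ μ₂ : MulU p t lam) : Prop :=
  ∃ α : Umod p t lam ≃+ Umod p t lam, ∀ x y, α (μ₁.1 x y) = μ₂.1 (α x) (α y)

/-- Isomorphism of multiplications on `V`, via `R_n`-module automorphisms of `V`. -/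
def relV (p n t : ℕ) (lam : Fin t → ℕ) (ν₁ ν₂ : MulV p n t lam) : Prop :=
  ∃ α : Vmod p n t lam ≃ₗ[Rn p n] Vmod p n t lam, ∀ x y, α (ν₁.1 x y) = ν₂.1 (α x) (α y)

/-- A multiplication on `U` satisfies the Lie axioms. -/
def IsLieU (p t : ℕ) (lam : Fin t → ℕ) (μ : MulU p t lam) : Prop :=
  (∀ x, μ.1 x x = 0) ∧
    ∀ x y z, μ.1 (μ.1 x y) z + μ.1 (μ.1 y z) x + μ.1 (μ.1 z x) y = 0

/-- A multiplication on `V` satisfies the Lie axioms. -/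
def IsLieV (p n t : ℕ) (lam : Fin t → ℕ) (ν : MulV p n t lam) : Prop :=
  (∀ x, ν.1 x x = 0) ∧
    ∀ x y z, ν.1 (ν.1 x y) z + ν.1 (ν.1 y z) x + ν.1 (ν.1 z x) y = 0

/-- Left-normed iterated products `(…((f 0 · f 1) · f 2)…) · f k` of a multiplication on `U`. -/
def leftIterU (p t : ℕ) (lam : Fin t → ℕ) (μ : MulU p t lam) :
    ℕ → (ℕ → Umod p t lam) → Umod p t lam
  | 0, f => f 0
  | k + 1, f => μ.1 (leftIterU p t lam μ k f) (f (k + 1))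

/-- Left-normed iterated products of a multiplication on `V`. -/
noncomputable def leftIterV (p n t : ℕ) (lam : Fin t → ℕ) (ν : MulV p n t lam) :
    ℕ → (ℕ → Vmod p n t lam) → Vmod p n t lam
  | 0, f => f 0
  | k + 1, f => ν.1 (leftIterV p n t lam ν k f) (f (k + 1))

/-- Nilpotency (for Lie multiplications): some lower-central-series term vanishes; equivalently
all left-normed products of some fixed length vanish. -/
def IsNilU (p t : ℕ) (lam : Fin t → ℕ) (μ : MulU p t lam) : Prop :=
  ∃ k, ∀ f : ℕ → Umod p t lam, leftIterU p t lam μ k f = 0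

/-- Nilpotency for multiplications on `V`. -/
def IsNilV (p n t : ℕ) (lam : Fin t → ℕ) (ν : MulV p n t lam) : Prop :=
  ∃ k, ∀ f : ℕ → Vmod p n t lam, leftIterV p n t lam ν k f = 0

/-- Abstract data. -/
structure GoodData (p t : ℕ) (lam : Fin t → ℕ) (R : Type) [CommRing R] (M : Fin t → Type)
    [∀ j, AddCommGroup (M j)] [∀ j, Module R (M j)] where
  pi : R
  rho : R →+* ZMod p
  rho_surj : Function.Surjective rho
  rho_ker : ∀ r, rho r = 0 ↔ pi ∣ r
  g : ∀ j, M j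
  gen : ∀ j (x : M j), ∃ r : R, x = r • g j
  ann : ∀ j (r : R), r • g j = 0 ↔ pi ^ lam j ∣ r
  cancel : ∀ j k (r : R), k ≤ lam j → (pi ^ lam j ∣ pi ^ k * r → pi ^ (lam j - k) ∣ r)
  pos : ∀ j, 1 ≤ lam j

abbrev WW (p t : ℕ) : Type := Fin t → ZMod p

def DD (p t : ℕ) (lam : Fin t → ℕ) (w : WW p t) : WW p t := fun j => if lam j = 1 then w j else 0

def AA (p t : ℕ) (lam : Fin t → ℕ) (b : Fin t → Fin t → ZMod p) (w : WW p t) : WW p t :=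
  fun i => ∑ j, (if lam i ≤ lam j then b i j else 0) * w j

def BB (p t : ℕ) (lam : Fin t → ℕ) (b : Fin t → Fin t → ZMod p) (w : WW p t) : WW p t :=
  fun i => ∑ j, (if lam j ≤ lam i then b i j else 0) * w j

abbrev CC (p t : ℕ) : Type := WW p t →+ WW p t →+ WW p t

def relC (p t : ℕ) (lam : Fin t → ℕ) (c c' : CC p t) : Prop :=
  ∃ b, Function.Surjective (AA p t lam b) ∧
    ∀ u v, BB p t lam b (c u v) = c' (AA p t lam b u) (AA p t lam b v)

def LieC (p t : ℕ) (lam : Fin t → ℕ) (c : CC p t) : Prop :=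
  (∀ u, c u u = 0) ∧ ∀ u v w, c (DD p t lam (c u v)) w + c (DD p t lam (c v w)) u
    + c (DD p t lam (c w u)) v = 0

def iterC (p t : ℕ) (lam : Fin t → ℕ) (c : CC p t) : ℕ → (ℕ → WW p t) → WW p t
  | 0, f => f 0
  | k + 1, f => DD p t lam (c (iterC p t lam c k f) (f (k + 1)))

def NilC (p t : ℕ) (lam : Fin t → ℕ) (c : CC p t) : Prop :=
  ∃ k, ∀ f, iterC p t lam c k f = 0

def iterG {M : Type} (m : M → M → M) : ℕ → (ℕ → M) → M
  | 0, f => f 0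
  | k + 1, f => m (iterG m k f) (f (k + 1))

def LieG {M : Type} [AddCommGroup M] (m : M → M → M) : Prop :=
  (∀ x, m x x = 0) ∧ ∀ x y z, m (m x y) z + m (m y z) x + m (m z x) y = 0

def NilG {M : Type} [AddCommGroup M] (m : M → M → M) : Prop :=
  ∃ k, ∀ f, iterG m k f = 0

structure IsBil (R : Type) {M : Type} [CommRing R] [AddCommGroup M] [Module R M]
    (m : M → M → M) : Prop where
  addl : ∀ x y z, m (x + y) z = m x z + m y z
  addr : ∀ x y z, m x (y + z) = m x y + m x z
  sml : ∀ (r : R) x y, m (r • x) y = r • m x y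
  smr : ∀ (r : R) x y, m x (r • y) = r • m x y

/-- invariance -/
theorem LieG_of_iso {M : Type} [AddCommGroup M] (m m' : M → M → M) (α : M ≃+ M)
    (h : ∀ x y, α (m x y) = m' (α x) (α y)) : LieG m → LieG m' := by
  rintro ⟨h1, h2⟩
  refine ⟨fun x => ?_, fun x y z => ?_⟩
  · obtain ⟨x, rfl⟩ := α.surjective x
    rw [← h, h1, map_zero]
  · obtain ⟨x, rfl⟩ := α.surjective x
    obtain ⟨y, rfl⟩ := α.surjective y
    obtain ⟨z, rfl⟩ := α.surjective z
    simp only [← h, ← map_add, h2, map_zero]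

theorem NilG_of_iso {M : Type} [AddCommGroup M] (m m' : M → M → M) (α : M ≃+ M)
    (h : ∀ x y, α (m x y) = m' (α x) (α y)) : NilG m → NilG m' := by
  rintro ⟨k, hk⟩
  have key : ∀ k (f : ℕ → M), iterG m' k (fun i => α (f i)) = α (iterG m k f) := by
    intro k f
    induction k with
    | zero => rfl
    | succ k ih => simp only [iterG, ih, h]
  refine ⟨k, fun f => ?_⟩
  have := key k (fun i => α.symm (f i))
  simp only [AddEquiv.apply_symm_apply] at this
  rw [this, hk, map_zero]

namespace GoodData

section
variable {p t : ℕ} {lam : Fin t → ℕ} {R : Type} [CommRing R] {M : Fin t → Type}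
    [∀ j, AddCommGroup (M j)] [∀ j, Module R (M j)] (G : GoodData p t lam R M)

theorem ex_repr (x : ∀ j, M j) : ∃ r : Fin t → R, x = fun j => r j • G.g j := by
  choose r hr using fun j => G.gen j (x j)
  exact ⟨r, funext hr⟩

theorem ex_lift (w : WW p t) : ∃ r : Fin t → R, w = fun j => G.rho (r j) := by
  choose r hr using fun j => G.rho_surj (w j)
  exact ⟨r, funext fun j => (hr j).symm⟩

noncomputable def q (x : ∀ j, M j) : WW p t := fun j => G.rho ((G.ex_repr x).choose j)

noncomputable def io (w : WW p t) : ∀ j, M j :=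
  fun j => (G.pi ^ (lam j - 1) * (G.ex_lift w).choose j) • G.g j

theorem smul_eq (j) (r s : R) : r • G.g j = s • G.g j ↔ G.pi ^ lam j ∣ r - s := by
  rw [← G.ann, sub_smul, sub_eq_zero]

theorem rho_eq (r s : R) : G.rho r = G.rho s ↔ G.pi ∣ r - s := by
  rw [← G.rho_ker, map_sub, sub_eq_zero]

theorem q_mk (r : Fin t → R) : G.q (fun j => r j • G.g j) = fun j => G.rho (r j) := by
  funext j
  have h := congrFun (G.ex_repr (fun j => r j • G.g j)).choose_spec j
  beta_reduce at h
  rw [G.smul_eq] at h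
  unfold q
  symm
  rw [G.rho_eq]
  exact (dvd_pow_self _ (by have := G.pos j; omega)).trans h

theorem pow_sub_mul (j) : G.pi ^ lam j = G.pi ^ (lam j - 1) * G.pi := by
  rw [← pow_succ, Nat.sub_add_cancel (G.pos j)]

theorem io_mk (r : Fin t → R) :
    G.io (fun j => G.rho (r j)) = fun j => (G.pi ^ (lam j - 1) * r j) • G.g j := by
  funext j
  have h := congrFun (G.ex_lift (fun j => G.rho (r j))).choose_spec j
  beta_reduce at h
  rw [G.rho_eq] at h
  unfold io
  symm
  rw [G.smul_eq, ← mul_sub, G.pow_sub_mul]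
  exact mul_dvd_mul_left _ h

theorem q_add (x y) : G.q (x + y) = G.q x + G.q y := by
  obtain ⟨r, rfl⟩ := G.ex_repr x
  obtain ⟨s, rfl⟩ := G.ex_repr y
  have : ((fun j => r j • G.g j) + fun j => s j • G.g j) = fun j => (r j + s j) • G.g j := by
    funext j; simp [add_smul]
  rw [this]
  simp only [q_mk]
  funext j; simp

theorem q_smul (a : R) (x) : G.q (a • x) = G.rho a • G.q x := by
  obtain ⟨r, rfl⟩ := G.ex_repr x
  have : (a • (fun j => r j • G.g j)) = fun j => (a * r j) • G.g j := by
    funext j; simp [mul_smul]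
  rw [this]
  simp only [q_mk]
  funext j; simp

theorem io_add (x y) : G.io (x + y) = G.io x + G.io y := by
  obtain ⟨r, rfl⟩ := G.ex_lift x
  obtain ⟨s, rfl⟩ := G.ex_lift y
  have : ((fun j => G.rho (r j)) + fun j => G.rho (s j)) = fun j => G.rho (r j + s j) := by
    funext j; simp
  rw [this]
  simp only [io_mk]
  funext j; simp [mul_add, add_smul]

theorem io_smul (a : R) (x) : G.io (G.rho a • x) = a • G.io x := by
  obtain ⟨r, rfl⟩ := G.ex_lift x
  have : (G.rho a • fun j => G.rho (r j)) = fun j => G.rho (a * r j) := by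
    funext j; simp
  rw [this]
  simp only [io_mk]
  funext j; simp only [Pi.smul_apply, smul_smul]; congr 1; ring

theorem io_zero : G.io 0 = 0 := by
  have := G.io_add 0 0
  simpa using this

theorem q_zero : G.q 0 = 0 := by
  have := G.q_add 0 0
  simpa using this

theorem q_surj : Function.Surjective G.q := by
  intro w
  obtain ⟨r, rfl⟩ := G.ex_lift w
  exact ⟨_, G.q_mk r⟩

theorem io_inj : Function.Injective G.io := by
  intro x y h
  obtain ⟨r, rfl⟩ := G.ex_lift x
  obtain ⟨s, rfl⟩ := G.ex_lift y
  simp only [io_mk] at h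
  funext j
  have := congrFun h j
  beta_reduce at this
  rw [G.smul_eq, ← mul_sub] at this
  have := G.cancel j _ _ (by omega) this
  rw [Nat.sub_sub_self (G.pos j), pow_one] at this
  rwa [G.rho_eq]

theorem q_io (w) : G.q (G.io w) = DD p t lam w := by
  obtain ⟨r, rfl⟩ := G.ex_lift w
  rw [io_mk, q_mk]
  funext j
  have hpi : G.rho G.pi = 0 := (G.rho_ker _).2 dvd_rfl
  have := G.pos j
  simp only [DD, map_mul, map_pow, hpi]
  split_ifs with h
  · simp [h]
  · rw [zero_pow (by omega), zero_mul]

theorem q_ker (x) (h : G.q x = 0) : ∃ y, x = G.pi • y := by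
  obtain ⟨r, rfl⟩ := G.ex_repr x
  rw [q_mk] at h
  have h' : ∀ j, G.pi ∣ r j := fun j => (G.rho_ker _).1 (congrFun h j)
  choose s hs using h'
  refine ⟨fun j => s j • G.g j, ?_⟩
  funext j
  simp [hs j, mul_smul]

theorem q_eq (x x') (h : G.q x = G.q x') : ∃ y, x = x' + G.pi • y := by
  have : G.q (x - x') = 0 := by
    have := G.q_add (x - x') x'
    rw [sub_add_cancel, h] at this
    simpa using this
  obtain ⟨y, hy⟩ := G.q_ker _ this
  exact ⟨y, by rw [← hy]; abel⟩

theorem tor (x : ∀ j, M j) (h : G.pi • x = 0) : ∃ w, x = G.io w := by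
  obtain ⟨r, rfl⟩ := G.ex_repr x
  have h' : ∀ j, G.pi ^ (lam j - 1) ∣ r j := fun j => by
    have := congrFun h j
    simp only [Pi.smul_apply, smul_smul, Pi.zero_apply, G.ann] at this
    exact G.cancel j 1 _ (G.pos j) (by simpa using this)
  choose s hs using h'
  refine ⟨fun j => G.rho (s j), ?_⟩
  rw [io_mk]
  funext j
  rw [← hs j]

theorem ex_c (m : (∀ j, M j) → (∀ j, M j) → ∀ j, M j) (hm : IsBil R m)
    (hk : ∀ x y, G.pi • m x y = 0) :
    ∃ c : CC p t, ∀ x y, m x y = G.io (c (G.q x) (G.q y)) := by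
  choose f hf using fun x y => G.tor _ (hk x y)
  choose s hs using G.q_surj
  have dep : ∀ x x' y y', G.q x = G.q x' → G.q y = G.q y' → m x y = m x' y' := by
    intro x x' y y' h1 h2
    obtain ⟨u, rfl⟩ := G.q_eq _ _ h1
    obtain ⟨v, rfl⟩ := G.q_eq _ _ h2
    rw [hm.addl, hm.addr, hm.sml, hk, hm.smr, hk]; simp
  refine ⟨AddMonoidHom.mk' (fun u => AddMonoidHom.mk' (fun v => f (s u) (s v)) ?_) ?_, ?_⟩
  · intro a b
    apply G.io_inj
    rw [G.io_add, ← hf, ← hf, ← hf, ← hm.addr]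
    apply dep _ _ _ _ rfl
    rw [G.q_add, hs, hs, hs]
  · intro a b
    refine DFunLike.ext _ _ fun v => ?_
    change f _ _ = f _ _ + f _ _
    apply G.io_inj
    rw [G.io_add, ← hf, ← hf, ← hf, ← hm.addl]
    apply dep _ _ _ _ _ rfl
    rw [G.q_add, hs, hs, hs]
  · intro x y
    change _ = G.io (f _ _)
    rw [← hf]
    exact dep _ _ _ _ (hs _).symm (hs _).symm

theorem zsmul_c [NeZero p] (c : CC p t) (a : ZMod p) (u v) :
    c (a • u) v = a • c u v ∧ c u (a • v) = a • c u v := by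
  constructor
  · exact ZMod.map_smul (c.flip v) a u
  · exact ZMod.map_smul (c u) a v

theorem bil_c [NeZero p] (c : CC p t) : IsBil R (fun x y => G.io (c (G.q x) (G.q y))) := by
  constructor
  · intro x y z; simp [q_add, io_add]
  · intro x y z; simp [q_add, io_add]
  · intro x y z; simp only [q_smul, (zsmul_c _ _ _ _).1, io_smul]
  · intro x y z; simp only [q_smul, (zsmul_c _ _ _ _).2, io_smul]

theorem pi_io (w) : G.pi • G.io w = 0 := by
  rw [← io_smul, (G.rho_ker _).2 dvd_rfl, zero_smul, io_zero]

/-- maps -/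
theorem key (α : (∀ j, M j) →ₗ[R] (∀ j, M j)) (b0 : Fin t → Fin t → R)
    (h : ∀ i j, α (Pi.single j (G.g j)) i = (G.pi ^ (lam i - lam j) * b0 i j) • G.g i) :
    (∀ x, G.q (α x) = AA p t lam (fun i j => G.rho (b0 i j)) (G.q x)) ∧
    (∀ w, α (G.io w) = G.io (BB p t lam (fun i j => G.rho (b0 i j)) w)) := by
  have hα : ∀ r : Fin t → R, α (fun j => r j • G.g j) =
      fun i => (∑ j, r j * (G.pi ^ (lam i - lam j) * b0 i j)) • G.g i := by
    intro r
    have : (fun j => r j • G.g j) = ∑ j, r j • (Pi.single j (G.g j) : ∀ j, M j) := by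
      rw [← Finset.univ_sum_single (fun j => r j • G.g j)]
      refine Finset.sum_congr rfl fun j _ => ?_
      rw [Pi.single_smul]
    rw [this, map_sum]
    funext i
    simp only [Finset.sum_apply, map_smul, Pi.smul_apply, h, smul_smul, Finset.sum_smul]
  have hpi : G.rho G.pi = 0 := (G.rho_ker _).2 dvd_rfl
  constructor
  · intro x
    obtain ⟨r, rfl⟩ := G.ex_repr x
    rw [hα, q_mk, q_mk]
    funext i
    simp only [AA, map_sum, map_mul, map_pow, hpi]
    refine Finset.sum_congr rfl fun j _ => ?_
    split_ifs with hij
    · rw [Nat.sub_eq_zero_of_le hij]; ring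
    · rw [zero_pow (by omega)]; ring
  · intro w
    obtain ⟨r, rfl⟩ := G.ex_lift w
    rw [io_mk, hα]
    have : BB p t lam (fun i j => G.rho (b0 i j)) (fun j => G.rho (r j)) =
      fun i => G.rho (∑ j, (if lam j ≤ lam i then b0 i j else 0) * r j) := by
      funext i
      simp only [BB, map_sum, map_mul]
      refine Finset.sum_congr rfl fun j _ => ?_
      split_ifs <;> simp
    rw [this, io_mk]
    funext i
    rw [G.smul_eq, Finset.mul_sum, ← Finset.sum_sub_distrib]
    refine Finset.dvd_sum fun j _ => ?_
    have hi := G.pos i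
    have hj := G.pos j
    split_ifs with hij
    · have : G.pi ^ (lam i - 1) = G.pi ^ (lam j - 1) * G.pi ^ (lam i - lam j) := by
        rw [← pow_add]; congr 1; omega
      rw [this]
      convert dvd_zero _ using 1
      ring
    · have : lam j - 1 = lam i + (lam j - 1 - lam i) := by omega
      rw [this, pow_add]
      exact ⟨G.pi ^ (lam j - 1 - lam i) * r j * (G.pi ^ (lam i - lam j) * b0 i j), by ring⟩

theorem ex_b (α : (∀ j, M j) →ₗ[R] (∀ j, M j)) : ∃ b : Fin t → Fin t → ZMod p,
    (∀ x, G.q (α x) = AA p t lam b (G.q x)) ∧ (∀ w, α (G.io w) = G.io (BB p t lam b w)) := by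
  have h : ∀ i j, ∃ b0, α (Pi.single j (G.g j)) i = (G.pi ^ (lam i - lam j) * b0) • G.g i := by
    intro i j
    obtain ⟨a, ha⟩ := G.gen i (α (Pi.single j (G.g j)) i)
    have h1 : G.pi ^ lam j • (Pi.single j (G.g j) : ∀ j, M j) = 0 := by
      rw [← Pi.single_smul, (G.ann _ _).2 dvd_rfl, Pi.single_zero]
    have h2 : (G.pi ^ lam j * a) • G.g i = 0 := by
      rw [mul_smul, ← ha, ← Pi.smul_apply, ← map_smul, h1, map_zero, Pi.zero_apply]
    rw [G.ann] at h2
    have h3 : G.pi ^ (lam i - lam j) ∣ a := by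
      by_cases hij : lam j ≤ lam i
      · exact G.cancel _ _ _ hij h2
      · rw [Nat.sub_eq_zero_of_le (by omega)]; simp
    obtain ⟨b0, rfl⟩ := h3
    exact ⟨b0, ha⟩
  choose b0 hb0 using h
  exact ⟨_, G.key α b0 hb0⟩

theorem ex_phi (i j) (s : R) (h : G.pi ^ lam i ∣ G.pi ^ lam j * s) :
    ∃ φ : M j →ₗ[R] M i, φ (G.g j) = s • G.g i := by
  choose r hr using G.gen j
  have wd : ∀ a b : R, a • G.g j = b • G.g j → (a * s) • G.g i = (b * s) • G.g i := by
    intro a b hab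
    rw [G.smul_eq] at hab ⊢
    rw [← sub_mul]
    exact h.trans (mul_dvd_mul_right hab _)
  refine ⟨{ toFun := fun x => (r x * s) • G.g i, map_add' := ?_, map_smul' := ?_ }, ?_⟩
  · intro x y
    rw [← add_smul, ← add_mul]
    apply wd
    rw [add_smul, ← hr, ← hr, ← hr]
  · intro a x
    rw [RingHom.id_apply, smul_smul, ← mul_assoc]
    apply wd
    rw [mul_smul, ← hr, ← hr]
  · change (r (G.g j) * s) • G.g i = _
    rw [wd _ 1, one_mul]
    rw [← hr, one_smul]

theorem ex_alpha (b : Fin t → Fin t → ZMod p) : ∃ α : (∀ j, M j) →ₗ[R] (∀ j, M j),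
    (∀ x, G.q (α x) = AA p t lam b (G.q x)) ∧ (∀ w, α (G.io w) = G.io (BB p t lam b w)) := by
  choose b0 hb0 using fun i j => G.rho_surj (b i j)
  have h : ∀ i j, ∃ φ : M j →ₗ[R] M i,
      φ (G.g j) = (G.pi ^ (lam i - lam j) * b0 i j) • G.g i := by
    intro i j
    apply G.ex_phi
    rw [← mul_assoc, ← pow_add]
    exact (pow_dvd_pow _ (by omega)).mul_right _
  choose φ hφ using h
  have := G.key (LinearMap.pi fun i => ∑ j, (φ i j).comp (LinearMap.proj j)) b0 ?_
  · simp only [hb0] at this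
    exact ⟨_, this⟩
  · intro i j
    rw [← hφ]
    simp only [LinearMap.pi_apply, LinearMap.sum_apply, LinearMap.comp_apply, LinearMap.proj_apply]
    rw [Finset.sum_eq_single j]
    · simp
    · intro k _ hk
      rw [Pi.single_eq_of_ne hk, map_zero]
    · simp

theorem fin (G : GoodData p t lam R M) : Module.Finite R (∀ j, M j) := by
  have : ∀ j, Module.Finite R (M j) := fun j => by
    refine ⟨⟨{G.g j}, ?_⟩⟩
    rw [eq_top_iff]
    intro x _
    obtain ⟨r, rfl⟩ := G.gen j x
    exact Submodule.smul_mem _ _ (Submodule.subset_span (by simp))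
  infer_instance

theorem bij (α : (∀ j, M j) →ₗ[R] (∀ j, M j)) (b)
    (h : ∀ x, G.q (α x) = AA p t lam b (G.q x)) (hb : Function.Surjective (AA p t lam b)) :
    Function.Bijective α := by
  have hs : Function.Surjective α := by
    have h1 : ∀ x, ∃ y z, x = α y + G.pi • z := by
      intro x
      obtain ⟨w, hw⟩ := hb (G.q x)
      obtain ⟨y, rfl⟩ := G.q_surj w
      rw [← h] at hw
      obtain ⟨z, hz⟩ := G.q_eq _ _ hw.symm
      exact ⟨y, z, hz⟩
    have h2 : ∀ k x, ∃ y z, x = α y + G.pi ^ k • z := by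
      intro k
      induction k with
      | zero => intro x; exact ⟨0, x, by simp⟩
      | succ k ih =>
        intro x
        obtain ⟨y, z, rfl⟩ := ih x
        obtain ⟨y', z', rfl⟩ := h1 z
        refine ⟨y + G.pi ^ k • y', z', ?_⟩
        rw [map_add, map_smul, smul_add, smul_smul, pow_succ, add_assoc]
    intro x
    obtain ⟨y, z, rfl⟩ := h2 (∑ j, lam j) x
    refine ⟨y, ?_⟩
    have : G.pi ^ (∑ j, lam j) • z = 0 := by
      obtain ⟨r, rfl⟩ := G.ex_repr z
      funext j
      simp only [Pi.smul_apply, smul_smul, Pi.zero_apply]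
      rw [G.ann]
      exact (pow_dvd_pow _ (Finset.single_le_sum (f := lam) (fun _ _ => Nat.zero_le _)
        (Finset.mem_univ j))).mul_right _
    rw [this, add_zero]
  have := G.fin
  exact ⟨OrzechProperty.injective_of_surjective_endomorphism α hs, hs⟩

theorem rel_iff (m m' : (∀ j, M j) → (∀ j, M j) → ∀ j, M j) (c c' : CC p t)
    (h : ∀ x y, m x y = G.io (c (G.q x) (G.q y)))
    (h' : ∀ x y, m' x y = G.io (c' (G.q x) (G.q y))) :
    (∃ α : (∀ j, M j) ≃ₗ[R] (∀ j, M j), ∀ x y, α (m x y) = m' (α x) (α y)) ↔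
      relC p t lam c c' := by
  constructor
  · rintro ⟨α, hα⟩
    obtain ⟨b, hb1, hb2⟩ := G.ex_b α.toLinearMap
    simp only [LinearEquiv.coe_coe] at hb1 hb2
    refine ⟨b, ?_, ?_⟩
    · intro w
      obtain ⟨x, rfl⟩ := G.q_surj w
      obtain ⟨y, rfl⟩ := α.surjective x
      exact ⟨_, (hb1 y).symm⟩
    · intro u v
      obtain ⟨x, rfl⟩ := G.q_surj u
      obtain ⟨y, rfl⟩ := G.q_surj v
      apply G.io_inj
      rw [← hb2, ← h, hα, h', hb1, hb1]
  · rintro ⟨b, hb, hc⟩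
    obtain ⟨α, h1, h2⟩ := G.ex_alpha b
    refine ⟨LinearEquiv.ofBijective α (G.bij α b h1 hb), fun x y => ?_⟩
    simp only [LinearEquiv.ofBijective_apply]
    rw [h, h', h2, hc, h1, h1]

theorem lie_iff (m : (∀ j, M j) → (∀ j, M j) → ∀ j, M j) (c : CC p t)
    (h : ∀ x y, m x y = G.io (c (G.q x) (G.q y))) : LieG m ↔ LieC p t lam c := by
  have h0 : ∀ w, G.io w = 0 ↔ w = 0 := fun w =>
    ⟨fun hw => G.io_inj (hw.trans G.io_zero.symm), fun hw => hw ▸ G.io_zero⟩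
  simp only [LieG, LieC, h, q_io, ← io_add, h0, G.q_surj.forall]

theorem nil_iff (m : (∀ j, M j) → (∀ j, M j) → ∀ j, M j) (c : CC p t)
    (h : ∀ x y, m x y = G.io (c (G.q x) (G.q y))) : NilG m ↔ NilC p t lam c := by
  have key : ∀ k f, G.q (iterG m k f) = iterC p t lam c k (fun i => G.q (f i)) := by
    intro k f
    induction k with
    | zero => rfl
    | succ k ih => rw [iterG, iterC, h, q_io, ih]
  constructor
  · rintro ⟨k, hk⟩
    refine ⟨k, fun f => ?_⟩
    choose s hs using fun i => G.q_surj (f i)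
    have := key k s
    simp only [hs] at this
    rw [← this, hk, q_zero]
  · rintro ⟨k, hk⟩
    refine ⟨k + 1, fun f => ?_⟩
    rw [iterG, h, key, hk, map_zero, AddMonoidHom.zero_apply, io_zero]

theorem side [NeZero p] (Q : Type) (m : Q → (∀ j, M j) → (∀ j, M j) → ∀ j, M j)
    (hinj : Function.Injective m) (hb : ∀ a, IsBil R (m a)) (hk : ∀ a x y, G.pi • m a x y = 0)
    (hex : ∀ f, IsBil R f → (∀ x y, G.pi • f x y = 0) → ∃ a, m a = f)
    (rel : Q → Q → Prop)
    (hrel : ∀ a a', rel a a' ↔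
      ∃ α : (∀ j, M j) ≃ₗ[R] (∀ j, M j), ∀ x y, α (m a x y) = m a' (α x) (α y)) :
    ∃ Ψ : Quot rel ≃ Quot (relC p t lam), ∀ a c, Ψ (Quot.mk _ a) = Quot.mk _ c →
      (LieG (m a) ↔ LieC p t lam c) ∧ (NilG (m a) ↔ NilC p t lam c) := by
  choose e he using fun a => G.ex_c (m a) (hb a) (hk a)
  have e_inj : Function.Injective e := by
    intro a a' h
    apply hinj
    funext x y
    rw [he, he, h]
  have e_surj : Function.Surjective e := by
    intro c
    obtain ⟨a, ha⟩ := hex _ (G.bil_c c) (fun x y => G.pi_io _)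
    refine ⟨a, ?_⟩
    refine DFunLike.ext _ _ fun u => DFunLike.ext _ _ fun v => ?_
    obtain ⟨x, rfl⟩ := G.q_surj u
    obtain ⟨y, rfl⟩ := G.q_surj v
    apply G.io_inj
    rw [← he, ha]
  have hr : ∀ a a', rel a a' ↔ relC p t lam (e a) (e a') := fun a a' => by
    rw [hrel, G.rel_iff _ _ _ _ (he a) (he a')]
  let Ψ : Quot rel ≃ Quot (relC p t lam) := Quot.congr (Equiv.ofBijective e ⟨e_inj, e_surj⟩) hr
  refine ⟨Ψ, fun a c h => ?_⟩
  obtain ⟨a', rfl⟩ := e_surj c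
  have h1 : Ψ (Quot.mk _ a) = Ψ (Quot.mk _ a') := h
  have h2 : Quot.mk rel a = Quot.mk rel a' := Ψ.injective h1
  have h3 : (LieG (m a) ↔ LieG (m a')) ∧ (NilG (m a) ↔ NilG (m a')) := by
    have h4 := Quot.eqvGen_exact h2
    clear h h1 h2
    induction h4 with
    | rel x y hxy =>
      obtain ⟨α, hα⟩ := (hrel _ _).1 hxy
      have hα' : ∀ u v, α.symm (m y u v) = m x (α.symm u) (α.symm v) := by
        intro u v
        apply α.injective
        rw [hα]; simp
      exact ⟨⟨LieG_of_iso _ _ α.toAddEquiv hα, LieG_of_iso _ _ α.symm.toAddEquiv hα'⟩,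
        ⟨NilG_of_iso _ _ α.toAddEquiv hα, NilG_of_iso _ _ α.symm.toAddEquiv hα'⟩⟩
    | refl x => exact ⟨Iff.rfl, Iff.rfl⟩
    | symm x y _ ih => exact ⟨ih.1.symm, ih.2.symm⟩
    | trans x y z _ _ ih1 ih2 => exact ⟨ih1.1.trans ih2.1, ih1.2.trans ih2.2⟩
  rw [h3.1, h3.2]
  exact ⟨G.lie_iff _ _ (he a'), G.nil_iff _ _ (he a')⟩

end
end GoodData

theorem lin_of_isBil {R M : Type} [CommRing R] [AddCommGroup M] [Module R M]
    (f : M → M → M) (hf : IsBil R f) : ∃ a : M →ₗ[R] M →ₗ[R] M, (fun x y => a x y) = f :=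
  ⟨LinearMap.mk₂ R f hf.addl hf.sml hf.addr hf.smr, rfl⟩

def goodU (p t : ℕ) (hp : p.Prime) (lam : Fin t → ℕ) (hpos : ∀ j, 1 ≤ lam j) :
    GoodData p t lam ℤ (fun j => ZMod (p ^ lam j)) where
  pi := p
  rho := Int.castRingHom _
  rho_surj := ZMod.intCast_surjective
  rho_ker r := by simpa using ZMod.intCast_zmod_eq_zero_iff_dvd r p
  g j := 1
  gen j x := by
    obtain ⟨r, rfl⟩ := ZMod.intCast_surjective x
    exact ⟨r, by simp⟩
  ann j r := by
    rw [zsmul_one]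
    simpa using ZMod.intCast_zmod_eq_zero_iff_dvd r (p ^ lam j)
  cancel j k r hk h := by
    have hp0 : (p : ℤ) ^ k ≠ 0 := pow_ne_zero _ (by exact_mod_cast hp.ne_zero)
    rw [← Nat.add_sub_cancel' hk, pow_add] at h
    simpa using (mul_dvd_mul_iff_left hp0).1 h
  pos := hpos

theorem Rn_dvd (p n k : ℕ) (hk : k ≤ n) (f : Polynomial (ZMod p)) :
    Tn p n ^ k ∣ (Ideal.Quotient.mk _ f : Rn p n) ↔ (X : Polynomial (ZMod p)) ^ k ∣ f := by
  constructor
  · rintro ⟨h, hh⟩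
    obtain ⟨h, rfl⟩ := Ideal.Quotient.mk_surjective h
    rw [Tn, ← map_pow, ← map_mul, Ideal.Quotient.eq, Ideal.mem_span_singleton] at hh
    have h1 := (pow_dvd_pow X hk).trans hh
    exact (dvd_sub_left (dvd_mul_right _ _)).1 h1
  · rintro ⟨h, rfl⟩
    rw [map_mul, map_pow]
    exact dvd_mul_right _ _

noncomputable def goodV (p n t : ℕ) (hp : p.Prime) (lam : Fin t → ℕ) (hpos : ∀ j, 1 ≤ lam j)
    (hn : 1 ≤ n) (hlam : ∀ j, lam j ≤ n) :
    GoodData p t lam (Rn p n) (fun j => Rn p n ⧸ Submodule.span (Rn p n) {Tn p n ^ lam j}) where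
  pi := Tn p n
  rho := Ideal.Quotient.lift _ (Polynomial.evalRingHom 0) (by
    intro a ha
    obtain ⟨b, rfl⟩ := Ideal.mem_span_singleton.1 ha
    simp [zero_pow (show n ≠ 0 by omega)])
  rho_surj := by
    intro a
    exact ⟨Ideal.Quotient.mk _ (C a), by simp⟩
  rho_ker r := by
    obtain ⟨f, rfl⟩ := Ideal.Quotient.mk_surjective r
    have := Rn_dvd p n 1 hn f
    rw [pow_one, pow_one] at this
    rw [this, X_dvd_iff, Ideal.Quotient.lift_mk, coeff_zero_eq_eval_zero]
    rfl
  g j := Submodule.Quotient.mk 1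
  gen j x := by
    obtain ⟨r, rfl⟩ := Submodule.Quotient.mk_surjective _ x
    exact ⟨r, by rw [← Submodule.Quotient.mk_smul, smul_eq_mul, mul_one]⟩
  ann j r := by
    rw [← Submodule.Quotient.mk_smul, smul_eq_mul, mul_one, Submodule.Quotient.mk_eq_zero]
    exact Ideal.mem_span_singleton
  cancel j k r hk h := by
    have : Fact p.Prime := ⟨hp⟩
    obtain ⟨f, rfl⟩ := Ideal.Quotient.mk_surjective r
    have e : Tn p n ^ k * Ideal.Quotient.mk _ f = Ideal.Quotient.mk _ (X ^ k * f) := by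
      rw [map_mul, map_pow]; rfl
    rw [e, Rn_dvd _ _ _ (hlam j)] at h
    rw [Rn_dvd _ _ _ ((Nat.sub_le _ _).trans (hlam j))]
    rw [← Nat.add_sub_cancel' hk, pow_add] at h
    simpa using (mul_dvd_mul_iff_left (pow_ne_zero k X_ne_zero)).1 h
  pos := hpos

theorem sideU (p t : ℕ) (hp : p.Prime) (lam : Fin t → ℕ) (hpos : ∀ j, 1 ≤ lam j) :
    ∃ Ψ : Quot (relU p t lam) ≃ Quot (relC p t lam), ∀ a c, Ψ (Quot.mk _ a) = Quot.mk _ c →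
      (IsLieU p t lam a ↔ LieC p t lam c) ∧ (IsNilU p t lam a ↔ NilC p t lam c) := by
  have : NeZero p := ⟨hp.ne_zero⟩
  obtain ⟨Ψ, h⟩ := (goodU p t hp lam hpos).side (MulU p t lam) (fun a x y => a.1 x y)
    (by
      intro a b h
      apply Subtype.ext
      refine DFunLike.ext _ _ fun u => DFunLike.ext _ _ fun v => ?_
      exact congrFun (congrFun h u) v)
    (by
      intro a
      constructor
      · intro x y z; simp
      · intro x y z; simp
      · intro r x y; rw [map_zsmul]; rfl
      · intro r x y; rw [map_zsmul])
    (by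
      intro a x y
      exact (natCast_zsmul _ _).trans (a.2 x y))
    (by
      intro f hf hk
      refine ⟨⟨AddMonoidHom.mk' (fun u => AddMonoidHom.mk' (fun v => f u v) (hf.addr u)) ?_, ?_⟩, ?_⟩
      · intro a b
        exact DFunLike.ext _ _ fun v => hf.addl a b v
      · intro x y
        rw [← natCast_zsmul]
        exact hk x y
      · rfl)
    (relU p t lam)
    (by
      intro a a'
      constructor
      · rintro ⟨α, h⟩
        exact ⟨α.toIntLinearEquiv, h⟩
      · rintro ⟨α, h⟩
        exact ⟨α.toAddEquiv, h⟩)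
  refine ⟨Ψ, fun a c hac => ?_⟩
  obtain ⟨h1, h2⟩ := h a c hac
  refine ⟨h1, ?_⟩
  rw [← h2]
  have : ∀ k f, leftIterU p t lam a k f = iterG (fun x y => a.1 x y) k f := by
    intro k f
    induction k with
    | zero => rfl
    | succ k ih => rw [leftIterU, iterG, ih]
  simp only [IsNilU, NilG, this]

theorem sideV (p n t : ℕ) (hp : p.Prime) (lam : Fin t → ℕ) (hpos : ∀ j, 1 ≤ lam j)
    (hn : 1 ≤ n) (hlam : ∀ j, lam j ≤ n) :
    ∃ Ψ : Quot (relV p n t lam) ≃ Quot (relC p t lam), ∀ a c, Ψ (Quot.mk _ a) = Quot.mk _ c →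
      (IsLieV p n t lam a ↔ LieC p t lam c) ∧ (IsNilV p n t lam a ↔ NilC p t lam c) := by
  have : NeZero p := ⟨hp.ne_zero⟩
  obtain ⟨Ψ, h⟩ := (goodV p n t hp lam hpos hn hlam).side (MulV p n t lam) (fun a x y => a.1 x y)
    (by
      intro a b h
      apply Subtype.ext
      refine DFunLike.ext _ _ fun u => DFunLike.ext _ _ fun v => ?_
      exact congrFun (congrFun h u) v)
    (by
      intro a
      exact @IsBil.mk _ _ (_) (_) (_) _ (fun x y z => LinearMap.map_add₂ a.1 x y z)
        (fun x y z => map_add (a.1 x) y z) (fun r x y => LinearMap.map_smul₂ a.1 r x y)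
        (fun r x y => map_smul (a.1 x) r y))
    (by
      intro a x y
      exact a.2 x y)
    (by
      intro f hf hk
      obtain ⟨a, rfl⟩ := @lin_of_isBil _ _ (_) (_) (_) f hf
      exact ⟨⟨a, hk⟩, rfl⟩)
    (relV p n t lam)
    (by
      intro a a'
      exact Iff.rfl)
  refine ⟨Ψ, fun a c hac => ?_⟩
  obtain ⟨h1, h2⟩ := h a c hac
  refine ⟨h1, ?_⟩
  rw [← h2]
  have : ∀ k f, leftIterV p n t lam a k f = iterG (fun x y => a.1 x y) k f := by
    intro k f
    induction k with
    | zero => rfl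
    | succ k ih => rw [leftIterV, iterG, ih]
  simp only [IsNilV, NilG, this]

/-- For a partition `λ₁ ≥ ⋯ ≥ λ_t` of `n`, there is a bijection `Φ` between isomorphism classes
of biadditive multiplications on `U` killed by `p` and isomorphism classes of
`R_n`-bilinear multiplications on `V` killed by `T`, such that a class is Lie iff its image
is Lie, and in that case it is nilpotent iff its image is nilpotent. -/
theorem mult_correspondence_lie (p n t : ℕ) (hp : p.Prime) (lam : Fin t → ℕ)
    (hmono : Antitone lam) (hpos : ∀ j, 1 ≤ lam j) (hsum : ∑ j, lam j = n) :
    ∃ Φ : Quot (relU p t lam) ≃ Quot (relV p n t lam),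
      ∀ (μ : MulU p t lam) (ν : MulV p n t lam),
        Φ (Quot.mk _ μ) = Quot.mk _ ν →
          (IsLieU p t lam μ ↔ IsLieV p n t lam ν) ∧
          (IsLieU p t lam μ → (IsNilU p t lam μ ↔ IsNilV p n t lam ν)) := by
  rcases Nat.eq_zero_or_pos t with rfl | ht
  · have hU : ∀ a b : MulU p 0 lam, a = b := fun a b => Subtype.ext
      (DFunLike.ext _ _ fun u => DFunLike.ext _ _ fun v => Subsingleton.elim _ _)
    have hV : ∀ a b : MulV p n 0 lam, a = b := fun a b => Subtype.ext
      (DFunLike.ext _ _ fun u => DFunLike.ext _ _ fun v => Subsingleton.elim _ _)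
    refine ⟨⟨fun _ => Quot.mk _ ⟨0, fun _ _ => Subsingleton.elim _ _⟩,
      fun _ => Quot.mk _ ⟨0, fun _ _ => Subsingleton.elim _ _⟩, ?_, ?_⟩, ?_⟩
    · rintro ⟨a⟩
      exact congrArg _ (hU _ _)
    · rintro ⟨a⟩
      exact congrArg _ (hV _ _)
    · intro μ ν _
      refine ⟨⟨fun _ => ⟨fun _ => Subsingleton.elim _ _, fun _ _ _ => Subsingleton.elim _ _⟩,
        fun _ => ⟨fun _ => Subsingleton.elim _ _, fun _ _ _ => Subsingleton.elim _ _⟩⟩,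
        fun _ => ⟨fun _ => ⟨0, fun _ => Subsingleton.elim _ _⟩,
        fun _ => ⟨0, fun _ => Subsingleton.elim _ _⟩⟩⟩
  · have hlam : ∀ j, lam j ≤ n := fun j => hsum ▸
      Finset.single_le_sum (f := lam) (fun _ _ => Nat.zero_le _) (Finset.mem_univ j)
    have hn : 1 ≤ n := (hpos ⟨0, ht⟩).trans (hlam _)
    obtain ⟨Ψ, h1⟩ := sideU p t hp lam hpos
    obtain ⟨Ψ', h2⟩ := sideV p n t hp lam hpos hn hlam
    refine ⟨Ψ.trans Ψ'.symm, fun μ ν h => ?_⟩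
    rw [Equiv.trans_apply, Equiv.symm_apply_eq] at h
    obtain ⟨c, hc⟩ := Quot.exists_rep (Ψ (Quot.mk _ μ))
    obtain ⟨a1, a2⟩ := h1 μ c hc.symm
    obtain ⟨b1, b2⟩ := h2 ν c (h.symm.trans hc.symm)
    exact ⟨a1.trans b1.symm, fun _ => a2.trans b2.symm⟩
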